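/- Let G be a stochastic game with terminal set T. For every vertex v ∈ V: Prob^{σ1,σ2}_{G,v}(◇T) = 1 for every σ1 ∈ Σ1 and every fair strategy σ2 if and only if v ∈ V∖∃Pre*_f(V∖∀Pre*_f(T)). -/

import Mathlib

/-!
A play that follows edges, is fair at Player 2 and probabilistic vertices and stays in
`A = ∀Pre*(T)` must reach `T`: otherwise the vertices visited only finitely often contain `T` and
are closed under `∀Pre` (`mem_reachT_of_fair`), hence contain `A`, which is absurd since some
vertex is visited infinitely often. Fairness at Player 2 vertices is the hypothesis on the
strategy. At probabilistic vertices it holds almost surely: if `E` is the event that `u` recurs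
while `u'` is avoided from some fixed time on, the events "no `u'` so far, `u` will still be
visited" decrease to `E`, and at the next visit to `u` a fixed fraction `p` of them is lost, so
`μ E + p * μ E ≤ μ E` (`IsPathMeasure.ae_infOcc`). A vertex outside `∃Pre*(V ∖ A)` only reaches
vertices of `A`, which gives one implication (`reach_of_notMem`).

For the other one, Player 2 chooses successors uniformly, which is fair by the same recurrence
lemma. Player 1 chooses uniformly inside `A`, and outside `A` picks successors outside `A`. Then
`V ∖ A` cannot be left and contains no terminal vertex, while a path from a vertex of
`∃Pre*(V ∖ A)` to `V ∖ A` is followed with positive probability (`exists_not_reach`). The path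
measure used there comes from the Ionescu-Tulcea theorem (`exists_isPathMeasure`).
-/

open MeasureTheory
open scoped ENNReal Classical

/-- A turn-based two-player stochastic game on a finite vertex set `V`. -/
structure StochGame (V : Type*) [Fintype V] where
  /-- Player 1 vertices -/
  V1 : Finset V
  /-- Player 2 vertices -/
  V2 : Finset V
  /-- probabilistic vertices -/
  VP : Finset V
  cover : ∀ v : V, v ∈ V1 ∨ v ∈ V2 ∨ v ∈ VP
  disj12 : ∀ v : V, ¬(v ∈ V1 ∧ v ∈ V2)
  disj1P : ∀ v : V, ¬(v ∈ V1 ∧ v ∈ VP)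
  disj2P : ∀ v : V, ¬(v ∈ V2 ∧ v ∈ VP)
  /-- the probabilistic transition function -/
  δ : V → V → ℝ
  δ_nonneg : ∀ v v', 0 ≤ δ v v'
  δ_le_one : ∀ v v', δ v v' ≤ 1
  det : ∀ v : V, (v ∈ V1 ∨ v ∈ V2) → ∀ v', δ v v' = 0 ∨ δ v v' = 1
  prob : ∀ v ∈ VP, ∑ v' : V, δ v v' = 1
  post_nonempty : ∀ v : V, ∃ v', 0 < δ v v'

namespace StochGame

variable {V : Type*} [Fintype V]

/-- successors of a vertex -/
def post (G : StochGame V) (v : V) : Set V := {v' | 0 < G.δ v v'}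

/-- a vertex is terminal if `δ(v,v) = 1` and `δ(v,v') = 0` for `v' ≠ v`. -/
def Terminal (G : StochGame V) (v : V) : Prop :=
  G.δ v v = 1 ∧ ∀ v', v' ≠ v → G.δ v v' = 0

/-- A strategy for the player owning the vertices in `P`: a function assigning to each
finite history and current vertex a probability distribution over vertices, supported
on successors when the current vertex belongs to `P`. -/
structure Strategy (G : StochGame V) (P : Finset V) where
  f : List V → V → V → ℝ
  nonneg : ∀ h v v', 0 ≤ f h v v'
  sum_one : ∀ h v, ∑ v' : V, f h v v' = 1
  support : ∀ h v, v ∈ P → ∀ v', 0 < f h v v' → 0 < G.δ v v'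

variable {G : StochGame V} {P : Finset V}

/-- a memoryless strategy only depends on the current vertex -/
def Strategy.Memoryless (σ : Strategy G P) : Prop :=
  ∀ h h' cur, σ.f h cur = σ.f h' cur

/-- a deterministic (pure) strategy takes Dirac distributions as values -/
def Strategy.Deterministic (σ : Strategy G P) : Prop :=
  ∀ h cur, ∃ v', ∀ u, σ.f h cur u = if u = v' then 1 else 0

/-- a semi-Markov strategy depends only on the initial vertex, the number of elapsed
steps and the current vertex -/
def Strategy.SemiMarkov (σ : Strategy G P) : Prop :=
  ∀ (v0 : V) (h h' : List V) (cur : V), h.length = h'.length →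
    σ.f (v0 :: h) cur = σ.f (v0 :: h') cur

variable [DecidableEq V]

/-- one-step transition probability given strategies of both players -/
noncomputable def step (G : StochGame V) (σ1 : Strategy G G.V1) (σ2 : Strategy G G.V2)
    (h : List V) (v v' : V) : ℝ :=
  if v ∈ G.V1 then σ1.f h v v' else if v ∈ G.V2 then σ2.f h v v' else G.δ v v'

/-- the history consisting of the first `i` vertices of `w` -/
def hist (w : ℕ → V) (i : ℕ) : List V := (List.range i).map w

/-- probability that the play starts with the vertices `w 0, w 1, …, w n` when
the game starts at `v` and the players use strategies `σ1`, `σ2`. -/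
noncomputable def prefixProb (G : StochGame V) (σ1 : Strategy G G.V1) (σ2 : Strategy G G.V2)
    (v : V) (n : ℕ) (w : ℕ → V) : ℝ :=
  (if w 0 = v then 1 else 0) *
    ∏ i ∈ Finset.range n, G.step σ1 σ2 (hist w i) (w i) (w (i + 1))

/-- the cylinder of all infinite plays agreeing with `w` on the first `n+1` coordinates -/
def cyl (n : ℕ) (w : ℕ → V) : Set (ℕ → V) := {ω | ∀ i ≤ n, ω i = w i}

variable [MeasurableSpace V]

/-- `μ` is the path measure of the game `G` starting at `v` under strategies `σ1, σ2`:
it is the (unique) probability measure on `V^ω` (with the product σ-algebra) whose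
cylinder probabilities are given by the products of the transition probabilities. -/
def IsPathMeasure (G : StochGame V) (σ1 : Strategy G G.V1) (σ2 : Strategy G G.V2)
    (v : V) (μ : Measure (ℕ → V)) : Prop :=
  IsProbabilityMeasure μ ∧
    ∀ (n : ℕ) (w : ℕ → V), μ (cyl n w) = ENNReal.ofReal (G.prefixProb σ1 σ2 v n w)

/-- the set of vertices occurring infinitely often in a play -/
def infOcc (ω : ℕ → V) : Set V := {u | ∀ N, ∃ n, N ≤ n ∧ ω n = u}

/-- the set of plays that are fair for Player 2 -/
def FP2 (G : StochGame V) : Set (ℕ → V) :=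
  {ω | ∀ u ∈ G.V2, u ∈ infOcc ω → ∀ u' ∈ G.post u, u' ∈ infOcc ω}

/-- the event `◇T` that a terminal vertex is reached -/
def ReachT (G : StochGame V) : Set (ℕ → V) := {ω | ∃ i, G.Terminal (ω i)}

/-- A Player 2 strategy is (almost surely) fair if the fair plays have probability 1
under any Player 1 strategy and any initial vertex. -/
def Fair (G : StochGame V) (σ2 : Strategy G G.V2) : Prop :=
  ∀ (σ1 : Strategy G G.V1) (v : V) (μ : Measure (ℕ → V)),
    G.IsPathMeasure σ1 σ2 v μ → μ G.FP2 = 1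

/-- `G` is stopping under fairness: a terminal vertex is reached almost surely
whenever Player 2 plays a fair strategy. -/
def StoppingUnderFairness (G : StochGame V) : Prop :=
  ∀ (σ1 : Strategy G G.V1) (σ2 : Strategy G G.V2), G.Fair σ2 →
    ∀ (v : V) (μ : Measure (ℕ → V)), G.IsPathMeasure σ1 σ2 v μ → μ G.ReachT = 1

/-- the total accumulated reward of a play -/
noncomputable def rew (r : V → ℝ) (ω : ℕ → V) : ℝ≥0∞ := ∑' i, ENNReal.ofReal (r (ω i))

/-- the expected total reward -/
noncomputable def expRew (μ : Measure (ℕ → V)) (r : V → ℝ) : ℝ≥0∞ := ∫⁻ ω, rew r ω ∂μ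

end StochGame

namespace StochGame

variable {V : Type*} [Fintype V]

/-- `δ(v,C) = Σ_{v' ∈ C} δ(v,v')` -/
noncomputable def deltaSet (G : StochGame V) (v : V) (C : Set V) : ℝ :=
  ∑ v' : V, if v' ∈ C then G.δ v v' else 0

/-- `∃Pre_f(C)` -/
noncomputable def existsPre (G : StochGame V) (C : Set V) : Set V :=
  {v | 0 < G.deltaSet v C}

/-- `∀Pre_f(C)` -/
noncomputable def forallPre (G : StochGame V) (C : Set V) : Set V :=
  {v | (v ∈ G.V2 ∨ v ∈ G.VP) ∧ 0 < G.deltaSet v C} ∪ {v | v ∈ G.V1 ∧ G.post v ⊆ C}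

/-- `F*(C)`: the least set `X` with `C ⊆ X` and `F(X) ⊆ X`. -/
def preStar (F : Set V → Set V) (C : Set V) : Set V := ⋂₀ {X | C ⊆ X ∧ F X ⊆ X}

end StochGame

namespace StochGame

open Filter Topology ProbabilityTheory

/-! ### Finite-horizon computations with a path measure -/

section Path

variable {V : Type*} [Fintype V] [DecidableEq V] {G : StochGame V}
  {σ1 : Strategy G G.V1} {σ2 : Strategy G G.V2}

lemma step_nonneg (h : List V) (u u' : V) : 0 ≤ G.step σ1 σ2 h u u' := by
  unfold step
  split_ifs
  exacts [σ1.nonneg _ _ _, σ2.nonneg _ _ _, G.δ_nonneg _ _]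

lemma sum_step (h : List V) (u : V) : ∑ u', G.step σ1 σ2 h u u' = 1 := by
  unfold step
  split_ifs with h1 h2
  · exact σ1.sum_one _ _
  · exact σ2.sum_one _ _
  · exact G.prob u (((G.cover u).resolve_left h1).resolve_left h2)

lemma δ_pos_of_step_pos {h : List V} {u u' : V} (hs : 0 < G.step σ1 σ2 h u u') :
    0 < G.δ u u' := by
  unfold step at hs
  split_ifs at hs with h1 h2
  · exact σ1.support _ _ h1 _ hs
  · exact σ2.support _ _ h2 _ hs
  · exact hs

omit [Fintype V] [DecidableEq V] in
lemma hist_congr {w w' : ℕ → V} {n : ℕ} (h : ∀ i < n, w i = w' i) : hist w n = hist w' n :=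
  List.map_congr_left fun i hi => h i (List.mem_range.1 hi)

/-- The first `n + 1` vertices of a play. -/
def prefixMap (n : ℕ) (ω : ℕ → V) (i : Fin (n + 1)) : V := ω i

/-- The set `A` of plays is determined by the coordinates `0, …, n`. -/
def DependsUpTo (n : ℕ) (A : Set (ℕ → V)) : Prop :=
  ∀ ω ω' : ℕ → V, (∀ i ≤ n, ω i = ω' i) → ω ∈ A → ω' ∈ A

omit [Fintype V] [DecidableEq V] in
lemma preimage_eq_cyl (n : ℕ) (w : ℕ → V) :
    prefixMap n ⁻¹' {prefixMap n w} = cyl n w := by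
  ext ω
  simp only [Set.mem_preimage, Set.mem_singleton_iff, funext_iff]
  exact ⟨fun h i hi => h ⟨i, by omega⟩, fun h i => h i (by have := i.2; omega)⟩

omit [Fintype V] [DecidableEq V] in
lemma DependsUpTo.preimage_image {n : ℕ} {A : Set (ℕ → V)} (hA : DependsUpTo n A) :
    prefixMap n ⁻¹'
      (prefixMap n '' A) = A := by
  refine Set.Subset.antisymm ?_ (Set.subset_preimage_image _ _)
  rintro ω ⟨ω', hω', he⟩
  refine hA ω' ω (fun i hi => ?_) hω'
  exact congrFun he ⟨i, by omega⟩


variable [MeasurableSpace V] [DiscreteMeasurableSpace V]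

omit [Fintype V] [DecidableEq V] [DiscreteMeasurableSpace V] in
lemma measurable_prefixMap (n : ℕ) : Measurable (prefixMap (V := V) n) :=
  measurable_pi_lambda _ fun _ => measurable_pi_apply _

omit [DecidableEq V] in
/-- A set determined by finitely many coordinates is a finite disjoint union of cylinders. -/
lemma DependsUpTo.measure_eq_sum {n : ℕ} {A : Set (ℕ → V)} (hA : DependsUpTo n A)
    (μ : Measure (ℕ → V)) :
    μ A = ∑ x ∈ (prefixMap n '' A).toFinset,
      μ (prefixMap n ⁻¹' {x}) := by
  rw [sum_measure_preimage_singleton _ fun y _ => measurable_prefixMap n (measurableSet_singleton y),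
    Set.coe_toFinset, hA.preimage_image]

omit [DecidableEq V] in
lemma DependsUpTo.measurableSet {n : ℕ} {A : Set (ℕ → V)} (hA : DependsUpTo n A) :
    MeasurableSet A := by
  rw [← hA.preimage_image]
  exact measurable_prefixMap n (Set.toFinite _).measurableSet

variable {v : V} {μ : Measure (ℕ → V)}

omit [DiscreteMeasurableSpace V] in
lemma IsPathMeasure.cyl_succ (hμ : G.IsPathMeasure σ1 σ2 v μ) (n : ℕ) (w : ℕ → V) :
    μ (cyl (n + 1) w) =
      μ (cyl n w) * ENNReal.ofReal (G.step σ1 σ2 (hist w n) (w n) (w (n + 1))) := by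
  rw [hμ.2, hμ.2, ← ENNReal.ofReal_mul]
  · simp only [prefixProb, Finset.prod_range_succ, mul_assoc]
  · exact mul_nonneg (by split_ifs <;> norm_num) (Finset.prod_nonneg fun i _ => step_nonneg _ _ _)

/-- One-step lower bound: if from every history in `A` (an event known at time `n`) the next
vertex is `u'` with probability at least `p`, then so it is conditionally on `A`. -/
lemma IsPathMeasure.le_measure_next (hμ : G.IsPathMeasure σ1 σ2 v μ) {n : ℕ} {A : Set (ℕ → V)}
    (hA : DependsUpTo n A) {p : ℝ} {u' : V}
    (hp : ∀ ω ∈ A, p ≤ G.step σ1 σ2 (hist ω n) (ω n) u') :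
    ENNReal.ofReal p * μ A ≤ μ (A ∩ {ω | ω (n + 1) = u'}) := by
  rw [← Measure.restrict_apply hA.measurableSet, hA.measure_eq_sum μ, hA.measure_eq_sum,
    Finset.mul_sum]
  refine Finset.sum_le_sum fun x hx => ?_
  rw [Measure.restrict_apply (measurable_prefixMap n (measurableSet_singleton x))]
  obtain ⟨ω, hω, rfl⟩ := Set.mem_toFinset.1 hx
  rw [preimage_eq_cyl]
  have hlow : ∀ i ≤ n, Function.update ω (n + 1) u' i = ω i := fun i hi =>
    Function.update_of_ne (by omega) _ _
  have hc : cyl n (Function.update ω (n + 1) u') = cyl n ω := by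
    ext ω'
    exact forall₂_congr fun i hi => by rw [hlow i hi]
  have hcs : cyl n ω ∩ {ω | ω (n + 1) = u'} = cyl (n + 1) (Function.update ω (n + 1) u') := by
    ext ω'
    constructor
    · rintro ⟨h1, h2⟩ i hi
      rcases Nat.lt_or_ge n i with h | h
      · obtain rfl : i = n + 1 := by omega
        rw [Function.update_self]
        exact h2
      · rw [hlow i h]
        exact h1 i h
    · intro h
      refine ⟨fun i hi => by rw [← hlow i hi]; exact h i (by omega), ?_⟩
      simpa using h (n + 1) le_rfl
  rw [hcs, hμ.cyl_succ, hc, mul_comm, hist_congr fun i hi => hlow i hi.le, hlow n le_rfl,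
    Function.update_self]
  gcongr
  exact hp ω hω

/-- Almost every play starts at `v` and only uses transitions of positive probability. -/
lemma IsPathMeasure.ae_step_pos (hμ : G.IsPathMeasure σ1 σ2 v μ) :
    ∀ᵐ ω ∂μ, ω 0 = v ∧ ∀ n, 0 < G.step σ1 σ2 (hist ω n) (ω n) (ω (n + 1)) := by
  suffices H : ∀ᵐ ω ∂μ, ∀ n,
      ω 0 = v ∧ 0 < G.step σ1 σ2 (hist ω n) (ω n) (ω (n + 1)) from
    H.mono fun ω h => ⟨(h 0).1, fun n => (h n).2⟩
  refine ae_all_iff.2 fun n => ?_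
  have hA : DependsUpTo (n + 1)
      {ω : ℕ → V | ω 0 = v ∧ 0 < G.step σ1 σ2 (hist ω n) (ω n) (ω (n + 1))}ᶜ := by
    intro ω ω' h hω
    simp only [Set.mem_compl_iff, Set.mem_ofPred_eq] at hω ⊢
    rwa [← h 0 (by omega), ← h n (by omega), ← h (n + 1) le_rfl,
      ← hist_congr fun i hi => h i (by omega)]
  rw [ae_iff]
  change μ {ω : ℕ → V | _ ∧ _}ᶜ = 0
  rw [hA.measure_eq_sum]
  refine Finset.sum_eq_zero fun x hx => ?_
  obtain ⟨ω, hω, rfl⟩ := Set.mem_toFinset.1 hx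
  rw [preimage_eq_cyl]
  by_cases h0 : ω 0 = v
  · have hs : G.step σ1 σ2 (hist ω n) (ω n) (ω (n + 1)) ≤ 0 := by
      by_contra hc
      exact hω ⟨h0, not_le.1 hc⟩
    rw [hμ.cyl_succ, ENNReal.ofReal_of_nonpos hs, mul_zero]
  · simp [hμ.2, prefixProb, h0]

omit [Fintype V] [DecidableEq V] [MeasurableSpace V] [DiscreteMeasurableSpace V] in
lemma mem_infOcc {ω : ℕ → V} {u : V} : u ∈ infOcc ω ↔ ∃ᶠ n in atTop, ω n = u :=
  frequently_atTop.symm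

/-- If every visit to `u` is followed by `u'` with probability at least `p > 0`, then almost surely
`u'` is visited infinitely often whenever `u` is. -/
lemma IsPathMeasure.ae_infOcc (hμ : G.IsPathMeasure σ1 σ2 v μ) {u u' : V} {p : ℝ} (hp : 0 < p)
    (hs : ∀ h, p ≤ G.step σ1 σ2 h u u') :
    ∀ᵐ ω ∂μ, u ∈ infOcc ω → u' ∈ infOcc ω := by
  have := hμ.1
  suffices H : ∀ N, μ {ω | u ∈ infOcc ω ∧ ∀ n, N ≤ n → ω n ≠ u'} = 0 by
    have H' : ∀ᵐ ω ∂μ, ∀ N, ¬ (u ∈ infOcc ω ∧ ∀ n, N ≤ n → ω n ≠ u') :=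
      ae_all_iff.2 fun N => by rw [ae_iff]; simpa only [not_not] using H N
    filter_upwards [H'] with ω h hu N
    have := h N
    push Not at this
    exact this hu
  intro N
  set E := {ω : ℕ → V | u ∈ infOcc ω ∧ ∀ n, N ≤ n → ω n ≠ u'} with hE
  -- `A m n`: the vertex `u'` is avoided on `[N, m]`, and `n` is the first visit to `u` after `m`.
  let A : ℕ → ℕ → Set (ℕ → V) := fun m n =>
    {ω | m ≤ n ∧ (∀ i, N ≤ i → i ≤ m → ω i ≠ u') ∧ ω n = u ∧ ∀ i, m ≤ i → i < n → ω i ≠ u}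
  have hA : ∀ m n, DependsUpTo n (A m n) := by
    rintro m n ω ω' h ⟨h1, h2, h3, h4⟩
    refine ⟨h1, fun i a b => ?_, ?_, fun i a b => ?_⟩
    · rw [← h i (by omega)]; exact h2 i a b
    · rw [← h n le_rfl]; exact h3
    · rw [← h i (by omega)]; exact h4 i a b
  have hAd : ∀ m, Pairwise (Function.onFun Disjoint (A m)) := by
    intro m n n' hne
    rw [Function.onFun, Set.disjoint_left]
    rintro ω ⟨h1, -, h3, h4⟩ ⟨h1', -, h3', h4'⟩
    rcases lt_or_gt_of_ne hne with h | h
    · exact h4' n h1 h h3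
    · exact h4 n' h1' h h3'
  let F : ℕ → Set (ℕ → V) := fun m => ⋃ n, A m n
  have hFmem : ∀ m ω, ω ∈ F m ↔ (∀ i, N ≤ i → i ≤ m → ω i ≠ u') ∧ ∃ n, m ≤ n ∧ ω n = u := by
    intro m ω
    simp only [F, Set.mem_iUnion]
    constructor
    · rintro ⟨n, h1, h2, h3, h4⟩
      exact ⟨h2, n, h1, h3⟩
    · rintro ⟨h2, h⟩
      refine ⟨Nat.find h, (Nat.find_spec h).1, h2, (Nat.find_spec h).2, fun i a b c => ?_⟩
      exact Nat.find_min h b ⟨a, c⟩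
  have hFm : ∀ m, MeasurableSet (F m) := fun m =>
    MeasurableSet.iUnion fun n => (hA m n).measurableSet
  have hFanti : Antitone F := by
    intro m m' hmm ω h
    rw [hFmem] at h ⊢
    obtain ⟨h1, n, h2, h3⟩ := h
    exact ⟨fun i a b => h1 i a (b.trans hmm), n, hmm.trans h2, h3⟩
  have hEF : E = ⋂ m, F m := by
    ext ω
    simp only [Set.mem_iInter, hFmem]
    constructor
    · rintro ⟨h1, h2⟩ m
      exact ⟨fun i a _ => h2 i a, h1 m⟩
    · intro h
      exact ⟨fun m => (h m).2, fun n hn => (h n).1 n hn le_rfl⟩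
  have hEm : MeasurableSet E := hEF ▸ MeasurableSet.iInter hFm
  -- Visiting `u` after time `m` costs a fraction `p`: `u'` follows and the play leaves `E`.
  have key : ∀ m, N ≤ m → μ E + ENNReal.ofReal p * μ E ≤ μ (F m) := by
    intro m hm
    have hsub : E ⊆ F m := hEF ▸ Set.iInter_subset _ _
    have h1 : ∀ n, μ.restrict E (A m n) + ENNReal.ofReal p * μ (A m n) ≤ μ (A m n) := by
      intro n
      by_cases hmn : m ≤ n
      · have hle := hμ.le_measure_next (hA m n) (p := p) (u' := u')
          (fun ω hω => by rw [hω.2.2.1]; exact hs _)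
        rw [Measure.restrict_apply (hA m n).measurableSet]
        calc μ (A m n ∩ E) + ENNReal.ofReal p * μ (A m n)
            ≤ μ (A m n ∩ E) + μ (A m n ∩ {ω | ω (n + 1) = u'}) := by gcongr
          _ = μ ((A m n ∩ E) ∪ (A m n ∩ {ω | ω (n + 1) = u'})) := by
              refine (measure_union' ?_ ((hA m n).measurableSet.inter hEm)).symm
              rw [Set.disjoint_left]
              rintro ω ⟨-, -, h⟩ ⟨-, h'⟩
              exact h (n + 1) (by omega) h'
          _ ≤ μ (A m n) := measure_mono (Set.union_subset Set.inter_subset_left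
              Set.inter_subset_left)
      · have : A m n = ∅ := Set.eq_empty_of_forall_notMem fun ω h => hmn h.1
        simp [this]
    have h2 : μ.restrict E (F m) + ENNReal.ofReal p * μ (F m) ≤ μ (F m) := by
      simp only [F]
      rw [measure_iUnion (hAd m) fun n => (hA m n).measurableSet,
        measure_iUnion (hAd m) fun n => (hA m n).measurableSet, ← ENNReal.tsum_mul_left,
        ← ENNReal.tsum_add]
      exact ENNReal.tsum_le_tsum h1
    rw [Measure.restrict_apply (hFm m), Set.inter_eq_self_of_subset_right hsub] at h2
    refine le_trans ?_ h2
    gcongr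
  have hlim : Tendsto (fun m => μ (F m)) atTop (𝓝 (μ E)) := by
    rw [hEF]
    exact tendsto_measure_iInter_atTop (fun m => (hFm m).nullMeasurableSet) hFanti
      ⟨0, measure_ne_top _ _⟩
  have hle : μ E + ENNReal.ofReal p * μ E ≤ μ E + 0 := by
    rw [add_zero]
    exact ge_of_tendsto hlim (eventually_atTop.2 ⟨N, key⟩)
  have h0 := (ENNReal.add_le_add_iff_left (measure_ne_top μ E)).1 hle
  have := (mul_eq_zero.1 (nonpos_iff_eq_zero.1 h0)).resolve_left
  exact this (by simpa using hp)

omit [DecidableEq V] in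
lemma measurableSet_mem_infOcc (u : V) : MeasurableSet {ω : ℕ → V | u ∈ infOcc ω} := by
  have : {ω : ℕ → V | u ∈ infOcc ω} = ⋂ N : ℕ, ⋃ n : ℕ, ⋃ _ : N ≤ n, (fun ω => ω n) ⁻¹' {u} := by
    ext ω
    simp [infOcc]
  rw [this]
  exact MeasurableSet.iInter fun N => MeasurableSet.iUnion fun n => MeasurableSet.iUnion fun _ =>
    measurable_pi_apply n (measurableSet_singleton u)

omit [DecidableEq V] in
lemma measurableSet_FP2 : MeasurableSet G.FP2 := by
  have : G.FP2 = ⋂ u : V, ⋂ u' : V, ⋂ _ : u ∈ G.V2 ∧ u' ∈ G.post u,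
      ({ω : ℕ → V | u ∈ infOcc ω}ᶜ ∪ {ω | u' ∈ infOcc ω}) := by
    ext ω
    simp only [FP2, Set.mem_ofPred_eq, Set.mem_iInter, Set.mem_union, Set.mem_compl_iff]
    constructor
    · rintro h u u' ⟨h1, h2⟩
      exact or_iff_not_imp_left.2 fun h3 => h u h1 (not_not.1 h3) u' h2
    · intro h u h1 h2 u' h3
      exact (h u u' ⟨h1, h3⟩).resolve_left (not_not.2 h2)
  rw [this]
  exact MeasurableSet.iInter fun u => MeasurableSet.iInter fun u' => MeasurableSet.iInter fun _ =>
    (measurableSet_mem_infOcc u).compl.union (measurableSet_mem_infOcc u')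

end Path

/-! ### Existence of path measures -/

section Existence

variable {V : Type*} [Fintype V] [DecidableEq V] [MeasurableSpace V] [DiscreteMeasurableSpace V]
  {G : StochGame V}

/-- The play that follows `x` up to time `n` and then stays at its last vertex. -/
def extend (n : ℕ) (x : (i : Finset.Iic n) → V) (i : ℕ) : V :=
  x ⟨min i n, Finset.mem_Iic.2 (min_le_right _ _)⟩

/-- The transition kernel of the game at time `n`, as a function of the whole history. -/
noncomputable def stepKernel (G : StochGame V) (σ1 : Strategy G G.V1) (σ2 : Strategy G G.V2)
    (n : ℕ) : Kernel ((i : Finset.Iic n) → V) V where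
  toFun x := ∑ u' : V, ENNReal.ofReal
    (G.step σ1 σ2 (hist (extend n x) n) (extend n x n) u') • Measure.dirac u'
  measurable' := Measurable.of_discrete

lemma stepKernel_singleton (σ1 : Strategy G G.V1) (σ2 : Strategy G G.V2) (n : ℕ)
    (x : (i : Finset.Iic n) → V) (u : V) :
    stepKernel G σ1 σ2 n x {u} =
      ENNReal.ofReal (G.step σ1 σ2 (hist (extend n x) n) (extend n x n) u) := by
  change (∑ u' : V, ENNReal.ofReal
    (G.step σ1 σ2 (hist (extend n x) n) (extend n x n) u') • Measure.dirac u') {u} = _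
  rw [Measure.finsetSum_apply, Finset.sum_eq_single u]
  · simp
  · intro b _ hb
    simp [hb]
  · simp

instance (σ1 : Strategy G G.V1) (σ2 : Strategy G G.V2) (n : ℕ) :
    IsMarkovKernel (stepKernel G σ1 σ2 n) := by
  refine ⟨fun x => ⟨?_⟩⟩
  change (∑ u' : V, ENNReal.ofReal
    (G.step σ1 σ2 (hist (extend n x) n) (extend n x n) u') • Measure.dirac u') Set.univ = 1
  rw [Measure.finsetSum_apply]
  simp only [Measure.smul_apply, measure_univ, smul_eq_mul, mul_one]
  rw [← ENNReal.ofReal_sum_of_nonneg fun _ _ => step_nonneg _ _ _, sum_step, ENNReal.ofReal_one]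

/-- The path measure exists, by the Ionescu-Tulcea theorem. -/
lemma exists_isPathMeasure (σ1 : Strategy G G.V1) (σ2 : Strategy G G.V2) (v : V) :
    ∃ μ : Measure (ℕ → V), G.IsPathMeasure σ1 σ2 v μ := by
  let κ : (n : ℕ) → Kernel ((i : Finset.Iic n) → V) V := stepKernel G σ1 σ2
  have : ∀ n, IsMarkovKernel (κ n) := fun n => inferInstanceAs (IsMarkovKernel (stepKernel _ _ _ n))
  let x₀ : (i : Finset.Iic 0) → V := fun _ => v
  let μ : Measure (ℕ → V) := Kernel.traj (X := fun _ => V) κ 0 x₀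
  have hcyl : ∀ n (w : ℕ → V),
      Preorder.frestrictLe (π := fun _ => V) n ⁻¹' {fun i : Finset.Iic n => w i} = cyl n w := by
    intro n w
    ext ω
    simp only [Set.mem_preimage, Set.mem_singleton_iff, funext_iff]
    exact ⟨fun h i hi => h (⟨i, Finset.mem_Iic.2 hi⟩ : Finset.Iic n),
      fun h i => h i (Finset.mem_Iic.1 i.2)⟩
  have hmeas : ∀ n, Measurable (Preorder.frestrictLe (α := ℕ) (π := fun _ => V) n) := fun n =>
    Preorder.measurable_frestrictLe (X := fun _ => V) n
  refine ⟨μ, inferInstanceAs (IsProbabilityMeasure (Kernel.traj (X := fun _ => V) κ 0 x₀)), ?_⟩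
  intro n w
  have hmap : ∀ n, μ (cyl n w) = Kernel.partialTraj (X := fun _ => V) κ 0 n x₀ {fun i : Finset.Iic n => w i} := by
    intro n
    rw [← hcyl, ← Measure.map_apply (hmeas n) (measurableSet_singleton _),
      Kernel.traj_map_frestrictLe_apply]
  induction n with
  | zero =>
    rw [hmap, Kernel.partialTraj_self, Kernel.id_apply, Measure.dirac_apply]
    by_cases h : w 0 = v
    · have : x₀ ∈ ({fun i : Finset.Iic 0 => w i} : Set ((i : Finset.Iic 0) → V)) := by
        rw [Set.mem_singleton_iff]
        funext i
        have : (i : ℕ) = 0 := by have := Finset.mem_Iic.1 i.2; omega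
        simp [x₀, this, h]
      simp [Set.indicator_of_mem this, prefixProb, h]
    · have : x₀ ∉ ({fun i : Finset.Iic 0 => w i} : Set ((i : Finset.Iic 0) → V)) := by
        rw [Set.mem_singleton_iff]
        intro he
        exact h (congrFun he ⟨0, by simp⟩).symm
      simp [Set.indicator_of_notMem this, prefixProb, h]
  | succ n ih =>
    have hprod := Kernel.partialTraj_compProd_eq_map_traj (X := fun _ => V) (κ := κ) (a := 0)
      (b := n) (Nat.zero_le n) (x₀ := x₀)
    have hset : cyl (n + 1) w = (fun x : ℕ → V => (Preorder.frestrictLe (π := fun _ => V) n x,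
        x (n + 1))) ⁻¹' ({fun i : Finset.Iic n => w i} ×ˢ {w (n + 1)}) := by
      rw [Set.mk_preimage_prod, hcyl]
      ext ω
      constructor
      · exact fun h => ⟨fun i hi => h i (by omega), h (n + 1) le_rfl⟩
      · rintro ⟨h1, h2⟩ i hi
        rcases Nat.lt_or_ge n i with h | h
        · obtain rfl : i = n + 1 := by omega
          exact h2
        · exact h1 i h
    have hext : ∀ i ≤ n, extend n (fun i : Finset.Iic n => w i) i = w i := fun i hi => by
      simp [extend, hi]
    rw [hset, ← Measure.map_apply ((hmeas n).prodMk (measurable_pi_apply _))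
      ((measurableSet_singleton _).prod (measurableSet_singleton _)), ← hprod,
      Measure.compProd_apply_prod (measurableSet_singleton _) (measurableSet_singleton _),
      lintegral_singleton, ← hmap, ih]
    change stepKernel G σ1 σ2 n (fun i => w i) {w (n + 1)} * _ = _
    rw [stepKernel_singleton, hist_congr fun i hi => hext i hi.le, hext n le_rfl,
      ← ENNReal.ofReal_mul (step_nonneg _ _ _)]
    congr 1
    simp only [prefixProb, Finset.prod_range_succ]
    ring

end Existence

/-! ### Uniform strategies -/

section Uniform

variable {V : Type*} [Fintype V] {G : StochGame V}

/-- The memoryless strategy that, at a vertex `u`, picks an element of `S u` uniformly. -/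
noncomputable def uniformOn (P : Finset V) (S : V → Finset V) (hne : ∀ u, (S u).Nonempty)
    (hS : ∀ u, ∀ u' ∈ S u, u' ∈ G.post u) : Strategy G P where
  f _ u u' := if u' ∈ S u then ((S u).card : ℝ)⁻¹ else 0
  nonneg _ u u' := by split_ifs <;> positivity
  sum_one _ u := by
    have : ((S u).card : ℝ) ≠ 0 := by exact_mod_cast (hne u).card_ne_zero
    simp [Finset.sum_ite_mem, this]
  support _ u _ u' h := by
    split_ifs at h with h'
    · exact hS u u' h'
    · exact absurd h (lt_irrefl _)

lemma uniformOn_pos_iff {P : Finset V} {S : V → Finset V} {hne : ∀ u, (S u).Nonempty}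
    {hS : ∀ u, ∀ u' ∈ S u, u' ∈ G.post u} {h : List V} {u u' : V} :
    0 < (uniformOn P S hne hS).f h u u' ↔ u' ∈ S u := by
  have : 0 < ((S u).card : ℝ)⁻¹ := by
    have := (hne u).card_pos
    positivity
  change 0 < (if u' ∈ S u then ((S u).card : ℝ)⁻¹ else 0) ↔ _
  split_ifs with h' <;> simp [h', this]

/-- The memoryless strategy choosing a successor uniformly at every vertex. -/
noncomputable def uniform (G : StochGame V) (P : Finset V) : Strategy G P :=
  uniformOn P (fun u => (G.post u).toFinset)
    (fun u => by
      obtain ⟨u', h⟩ := G.post_nonempty u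
      exact ⟨u', Set.mem_toFinset.2 h⟩)
    (fun _ _ h => Set.mem_toFinset.1 h)

lemma uniform_pos_iff {P : Finset V} {h : List V} {u u' : V} :
    0 < (uniform G P).f h u u' ↔ u' ∈ G.post u :=
  uniformOn_pos_iff.trans Set.mem_toFinset

variable [DecidableEq V] [MeasurableSpace V] [DiscreteMeasurableSpace V]

lemma fair_uniform : G.Fair (uniform G G.V2) := by
  intro σ1 v μ hμ
  have := hμ.1
  have H : ∀ᵐ ω ∂μ, ∀ u u' : V, u ∈ G.V2 ∧ u' ∈ G.post u → u ∈ infOcc ω → u' ∈ infOcc ω := by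
    refine ae_all_iff.2 fun u => ae_all_iff.2 fun u' => ?_
    by_cases h : u ∈ G.V2 ∧ u' ∈ G.post u
    · have h1 : u ∉ G.V1 := fun h1 => G.disj12 u ⟨h1, h.1⟩
      refine (hμ.ae_infOcc (p := (uniform G G.V2).f [] u u') (uniform_pos_iff.2 h.2)
        fun l => ?_).mono fun ω hω _ => hω
      rw [step, if_neg h1, if_pos h.1]
      exact le_rfl
    · exact Eventually.of_forall fun ω hc => absurd hc h
  rw [← measure_univ (μ := μ)]
  refine measure_congr (eventuallyEq_univ.2 ?_)
  filter_upwards [H] with ω h u hu hi u' hu'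
  exact h u u' ⟨hu, hu'⟩ hi

end Uniform

/-! ### The predecessor operators -/

section Pre

variable {V : Type*} [Fintype V] {G : StochGame V}

lemma deltaSet_pos_iff {u : V} {C : Set V} : 0 < G.deltaSet u C ↔ ∃ u' ∈ C, u' ∈ G.post u := by
  have hnn : ∀ u' ∈ Finset.univ, 0 ≤ if u' ∈ C then G.δ u u' else 0 := fun u' _ => by
    split_ifs
    exacts [G.δ_nonneg _ _, le_rfl]
  rw [deltaSet, Finset.sum_pos_iff_of_nonneg hnn]
  constructor
  · rintro ⟨u', -, h⟩
    split_ifs at h with h'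
    · exact ⟨u', h', h⟩
    · exact absurd h (lt_irrefl _)
  · rintro ⟨u', h1, h2⟩
    exact ⟨u', Finset.mem_univ _, by rwa [if_pos h1]⟩

lemma existsPre_mono : Monotone G.existsPre := fun C D h u hu => by
  obtain ⟨u', h1, h2⟩ := deltaSet_pos_iff.1 hu
  exact deltaSet_pos_iff.2 ⟨u', h h1, h2⟩

lemma forallPre_mono : Monotone G.forallPre := by
  rintro C D h u (⟨hu, hd⟩ | ⟨hu, hd⟩)
  · exact Or.inl ⟨hu, existsPre_mono h hd⟩
  · exact Or.inr ⟨hu, hd.trans h⟩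

omit [Fintype V] in
lemma subset_preStar (F : Set V → Set V) (C : Set V) : C ⊆ preStar F C :=
  Set.subset_sInter fun _ h => h.1

omit [Fintype V] in
lemma preStar_closed {F : Set V → Set V} (hF : Monotone F) (C : Set V) :
    F (preStar F C) ⊆ preStar F C :=
  Set.subset_sInter fun _ h => (hF (Set.sInter_subset_of_mem h)).trans h.2

omit [Fintype V] in
lemma preStar_subset {F : Set V → Set V} {C X : Set V} (h1 : C ⊆ X) (h2 : F X ⊆ X) :
    preStar F C ⊆ X :=
  Set.sInter_subset_of_mem ⟨h1, h2⟩

lemma Terminal.eq_of_post {u u' : V} (hu : G.Terminal u) (h : u' ∈ G.post u) : u' = u := by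
  by_contra hne
  have h' : 0 < G.δ u u' := h
  rw [hu.2 u' hne] at h'
  exact lt_irrefl _ h'

end Pre

/-! ### The two implications -/

section Main

variable {V : Type*} [Fintype V] {G : StochGame V}

/-- Purely combinatorial core of the almost sure reachability: a play along edges which treats
Player 2 and probabilistic vertices fairly and stays in `∀Pre*(T)` reaches `T`. The complement of
the set of vertices visited infinitely often is closed under `∀Pre`. -/
lemma mem_reachT_of_fair {ω : ℕ → V} (hpost : ∀ n, ω (n + 1) ∈ G.post (ω n))
    (hfair : ∀ u, u ∈ G.V2 ∨ u ∈ G.VP → u ∈ infOcc ω → ∀ u' ∈ G.post u, u' ∈ infOcc ω)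
    (hmem : ∀ n, ω n ∈ preStar G.forallPre {u | G.Terminal u}) : ω ∈ G.ReachT := by
  by_contra hT
  have hsub : preStar G.forallPre {u | G.Terminal u} ⊆ (infOcc ω)ᶜ := by
    refine preStar_subset ?_ ?_
    · intro u hu hi
      obtain ⟨n, -, rfl⟩ := hi 0
      exact hT ⟨n, hu⟩
    · rintro u (⟨hu, hd⟩ | ⟨-, hd⟩) hi
      · obtain ⟨u', h1, h2⟩ := deltaSet_pos_iff.1 hd
        exact h1 (hfair u hu hi u' h2)
      · -- finitely many successors, each visited finitely often, cannot follow `u` forever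
        have : ∀ u', ∀ᶠ n in atTop, u' ∈ G.post u → ω n ≠ u' := fun u' => by
          by_cases h : u' ∈ G.post u
          · have := hd h
            rw [Set.mem_compl_iff, mem_infOcc, not_frequently] at this
            exact this.mono fun n hn _ => hn
          · exact Eventually.of_forall fun n hc => absurd hc h
        have hall := (tendsto_add_atTop_nat 1).eventually (eventually_all.2 this)
        obtain ⟨n, hn, hne⟩ := ((mem_infOcc.1 hi).and_eventually hall).exists
        exact hne (ω (n + 1)) (hn ▸ hpost n) rfl
  -- some vertex is visited infinitely often
  have hfin : ∀ u, ∀ᶠ n in atTop, ω n ≠ u := fun u => by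
    by_contra h
    have hi : u ∈ infOcc ω := mem_infOcc.2 h
    obtain ⟨n, -, rfl⟩ := hi 0
    exact hsub (hmem n) hi
  obtain ⟨n, hn⟩ := (eventually_all.2 hfin).exists
  exact hn (ω n) rfl

variable [DecidableEq V] [MeasurableSpace V] [DiscreteMeasurableSpace V]

/-- If `∃Pre*(V ∖ ∀Pre*(T))` is avoided, every fair strategy reaches `T` almost surely. -/
lemma reach_of_notMem {v : V} {σ1 : Strategy G G.V1} {σ2 : Strategy G G.V2} {μ : Measure (ℕ → V)}
    (hv : v ∉ preStar G.existsPre (Set.univ \ preStar G.forallPre {u | G.Terminal u}))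
    (hσ : G.Fair σ2) (hμ : G.IsPathMeasure σ1 σ2 v μ) : μ G.ReachT = 1 := by
  have := hμ.1
  have hF : ∀ᵐ ω ∂μ, ω ∈ G.FP2 := (mem_ae_iff_prob_eq_one measurableSet_FP2).2 (hσ σ1 v μ hμ)
  have hP : ∀ᵐ ω ∂μ, ∀ u u' : V, u ∈ G.VP ∧ u' ∈ G.post u → u ∈ infOcc ω → u' ∈ infOcc ω := by
    refine ae_all_iff.2 fun u => ae_all_iff.2 fun u' => ?_
    by_cases h : u ∈ G.VP ∧ u' ∈ G.post u
    · refine (hμ.ae_infOcc (p := G.δ u u') h.2 fun l => ?_).mono fun ω hω _ => hω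
      rw [step, if_neg fun h1 => G.disj1P u ⟨h1, h.1⟩, if_neg fun h2 => G.disj2P u ⟨h2, h.1⟩]
    · exact Eventually.of_forall fun ω hc => absurd hc h
  rw [← measure_univ (μ := μ)]
  refine measure_congr (eventuallyEq_univ.2 ?_)
  filter_upwards [hF, hP, hμ.ae_step_pos] with ω h1 h2 h3
  have hpost : ∀ n, ω (n + 1) ∈ G.post (ω n) := fun n => δ_pos_of_step_pos (h3.2 n)
  have hnot : ∀ n,
      ω n ∉ preStar G.existsPre (Set.univ \ preStar G.forallPre {u | G.Terminal u}) := by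
    intro n
    induction n with
    | zero => rwa [h3.1]
    | succ n ih =>
      intro hc
      exact ih (preStar_closed existsPre_mono _ (deltaSet_pos_iff.2 ⟨_, hc, hpost n⟩))
  refine mem_reachT_of_fair hpost ?_ fun n => ?_
  · rintro u (hu | hu) hi u' hu'
    · exact h1 u hu hi u' hu'
    · exact h2 u u' ⟨hu, hu'⟩ hi
  · by_contra hc
    exact hnot n (subset_preStar _ _ ⟨trivial, hc⟩)

omit [DecidableEq V] [MeasurableSpace V] [DiscreteMeasurableSpace V] in
/-- Every vertex of `∃Pre*(V ∖ A)` is the start of a path that leaves `A` at its end only. -/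
lemma exists_path {v : V} {A : Set V} (hv : v ∈ preStar G.existsPre (Set.univ \ A)) :
    ∃ (n : ℕ) (w : ℕ → V), w 0 = v ∧ w n ∉ A ∧ ∀ i < n, w i ∈ A ∧ w (i + 1) ∈ G.post (w i) := by
  refine preStar_subset (X := {x | ∃ (n : ℕ) (w : ℕ → V), w 0 = x ∧ w n ∉ A ∧
    ∀ i < n, w i ∈ A ∧ w (i + 1) ∈ G.post (w i)}) ?_ ?_ hv
  · exact fun x hx => ⟨0, fun _ => x, rfl, hx.2, fun i hi => absurd hi (Nat.not_lt_zero i)⟩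
  · intro x hx
    obtain ⟨y, ⟨n, w, h0, hn, hs⟩, hy⟩ := deltaSet_pos_iff.1 hx
    by_cases hxA : x ∈ A
    · refine ⟨n + 1, fun i => Nat.casesOn i x w, rfl, hn, fun i hi => ?_⟩
      cases i with
      | zero => exact ⟨hxA, by rw [← h0] at hy; exact hy⟩
      | succ i => exact hs i (by omega)
    · exact ⟨0, fun _ => x, rfl, hxA, fun i hi => absurd hi (Nat.not_lt_zero i)⟩

/-- On `∃Pre*(V ∖ ∀Pre*(T))`, Player 1 can defeat the uniform (hence fair) strategy of Player 2:
choose successors uniformly inside `∀Pre*(T)`, and never return to it after having left it. -/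
lemma exists_not_reach {v : V}
    (hv : v ∈ preStar G.existsPre (Set.univ \ preStar G.forallPre {u | G.Terminal u})) :
    ∃ (σ1 : Strategy G G.V1) (σ2 : Strategy G G.V2) (μ : Measure (ℕ → V)),
      G.Fair σ2 ∧ G.IsPathMeasure σ1 σ2 v μ ∧ μ G.ReachT ≠ 1 := by
  obtain ⟨n, w, hw0, hwn, hw⟩ := exists_path hv
  set A := preStar G.forallPre {u | G.Terminal u} with hAdef
  let S : V → Finset V := fun u =>
    if u ∉ A ∧ (G.post u \ A).Nonempty then (G.post u \ A).toFinset else (G.post u).toFinset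
  have hne : ∀ u, (S u).Nonempty := fun u => by
    by_cases h : u ∉ A ∧ (G.post u \ A).Nonempty
    · simpa only [S, if_pos h, Set.toFinset_nonempty] using h.2
    · simp only [S, if_neg h, Set.toFinset_nonempty]
      exact G.post_nonempty u
  have hS : ∀ u, ∀ u' ∈ S u, u' ∈ G.post u := fun u u' hu' => by
    by_cases h : u ∉ A ∧ (G.post u \ A).Nonempty
    · simp only [S, if_pos h, Set.mem_toFinset] at hu'
      exact hu'.1
    · simpa only [S, if_neg h, Set.mem_toFinset] using hu'
  let σ1 : Strategy G G.V1 := uniformOn G.V1 S hne hS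
  let σ2 : Strategy G G.V2 := uniform G G.V2
  obtain ⟨μ, hμ⟩ := exists_isPathMeasure σ1 σ2 v
  have := hμ.1
  refine ⟨σ1, σ2, μ, fair_uniform, hμ, fun hone => ?_⟩
  -- inside `A` every edge has positive probability
  have hpos : ∀ h u u', u ∈ A → u' ∈ G.post u → 0 < G.step σ1 σ2 h u u' := by
    intro h u u' hu hmem
    unfold step
    split_ifs
    · refine uniformOn_pos_iff.2 ?_
      simpa only [S, if_neg (fun hc : u ∉ A ∧ _ => hc.1 hu), Set.mem_toFinset] using hmem
    · exact uniform_pos_iff.2 hmem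
    · exact hmem
  -- the complement of `A` is never left
  have hstay : ∀ h u u', u ∉ A → 0 < G.step σ1 σ2 h u u' → u' ∉ A := by
    intro h u u' hu hs hu'
    have hpost : u' ∈ G.post u := δ_pos_of_step_pos hs
    by_cases h1 : u ∈ G.V1
    · have hex : (G.post u \ A).Nonempty := by
        by_contra hc
        rw [Set.not_nonempty_iff_eq_empty, Set.sdiff_eq_empty] at hc
        exact hu (preStar_closed forallPre_mono _ (Or.inr ⟨h1, hc⟩))
      rw [step, if_pos h1] at hs
      have := uniformOn_pos_iff.1 hs
      simp only [S, if_pos (And.intro hu hex), Set.mem_toFinset] at this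
      exact this.2 hu'
    · exact hu (preStar_closed forallPre_mono _ (Or.inl
        ⟨(G.cover u).resolve_left h1, deltaSet_pos_iff.2 ⟨u', hu', hpost⟩⟩))
  -- with positive probability the play follows `w` and so leaves `A`
  have hcyl : 0 < μ (cyl n w) := by
    rw [hμ.2, ENNReal.ofReal_pos, prefixProb, if_pos hw0, one_mul]
    exact Finset.prod_pos fun i hi =>
      have := hw i (Finset.mem_range.1 hi)
      hpos _ _ _ this.1 this.2
  have hdisj : ∀ᵐ ω ∂μ, ω ∈ G.ReachT → ω ∉ cyl n w := by
    filter_upwards [hμ.ae_step_pos] with ω h3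
    rintro ⟨i, hi⟩ hc
    have hout : ∀ k, ω (n + k) ∉ A := by
      intro k
      induction k with
      | zero => rw [Nat.add_zero, hc n le_rfl]; exact hwn
      | succ k ih => exact hstay _ _ _ ih (h3.2 (n + k))
    have habs : ∀ k, ω (i + k) = ω i := by
      intro k
      induction k with
      | zero => rfl
      | succ k ih =>
        have : ω (i + k + 1) ∈ G.post (ω (i + k)) := δ_pos_of_step_pos (h3.2 (i + k))
        rw [ih] at this
        exact hi.eq_of_post this
    have := hout i
    rw [add_comm, habs n] at this
    exact this (subset_preStar _ _ hi)
  have hmeas : MeasurableSet G.ReachT := by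
    have : G.ReachT = ⋃ i : ℕ, (fun ω : ℕ → V => ω i) ⁻¹' {u | G.Terminal u} := by
      ext ω
      simp [ReachT]
    rw [this]
    exact MeasurableSet.iUnion fun i => measurable_pi_apply i (Set.toFinite _).measurableSet
  have hreach : ∀ᵐ ω ∂μ, ω ∈ G.ReachT := (mem_ae_iff_prob_eq_one hmeas).2 hone
  refine hcyl.ne' (measure_eq_zero_iff_ae_notMem.2 ?_)
  filter_upwards [hdisj, hreach] with ω h1 h2 using h1 h2

end Main

end StochGame

open StochGame in
/-- A vertex reaches the terminal set almost surely under every Player 1 strategy and every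
fair Player 2 strategy iff it lies in `V ∖ ∃Pre*_f(V ∖ ∀Pre*_f(T))`. -/
theorem almostSure_reach_iff_not_existsPreStar
    {V : Type*} [Fintype V] [DecidableEq V] [MeasurableSpace V] [DiscreteMeasurableSpace V]
    (G : StochGame V) (v : V) :
    (∀ (σ1 : G.Strategy G.V1) (σ2 : G.Strategy G.V2), G.Fair σ2 →
        ∀ μ : Measure (ℕ → V), G.IsPathMeasure σ1 σ2 v μ → μ G.ReachT = 1) ↔
      v ∈ (Set.univ \
        preStar G.existsPre (Set.univ \ preStar G.forallPre {u | G.Terminal u})) := by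
  constructor
  · intro h
    refine ⟨trivial, fun hv => ?_⟩
    obtain ⟨σ1, σ2, μ, hσ, hμ, hne⟩ := exists_not_reach hv
    exact hne (h σ1 σ2 hσ μ hμ)
  · rintro ⟨-, hv⟩ σ1 σ2 hσ μ hμ
    exact reach_of_notMem hv hσ hμ
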